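/- Let σ ∈ S_k and τ ∈ S_n with σ ≤ τ, and let ⟨σ⟩ be an occurrence of σ in τ. The occurrence poset [⟨σ⟩, τ] is a boolean algebra if and only if the pair (⟨σ⟩, τ) is separated. -/

import Mathlib

/-- `f` gives an occurrence of the pattern `σ` in `τ`: the positions `f 0 < f 1 < ⋯`
carry letters of `τ` in the same relative order as `σ`. -/
def IsOccurrence {k n : ℕ} (σ : Equiv.Perm (Fin k)) (τ : Equiv.Perm (Fin n))
    (f : Fin k → Fin n) : Prop :=
  StrictMono f ∧ ∀ i j : Fin k, σ i < σ j ↔ τ (f i) < τ (f j)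

/-- Two sets of kept positions `S, S'` (each containing the marked positions `A`)
determine the same element of the occurrence poset: the words of `τ` read along `S`
and along `S'` are order isomorphic, with the marked positions corresponding. -/
def OccEquiv {n : ℕ} (τ : Equiv.Perm (Fin n)) (A S S' : Finset (Fin n)) : Prop :=
  ∃ g : {x // x ∈ S} ≃o {x // x ∈ S'},
    (∀ a b : {x // x ∈ S}, τ a.1 < τ b.1 ↔ τ (g a).1 < τ (g b).1) ∧
    (∀ a : {x // x ∈ S}, a.1 ∈ A ↔ (g a).1 ∈ A)

/-- Representatives of elements of the occurrence poset with marked positions `A`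
and ground set `U`: sets of kept positions between `A` and `U`. -/
def OccCarrier {n : ℕ} (A U : Finset (Fin n)) := {S : Finset (Fin n) // A ⊆ S ∧ S ⊆ U}

/-- The occurrence poset `[⟨σ⟩, τ]` (with ground set `U`): kept-position sets modulo
order isomorphism respecting the marked occurrence. -/
def OccPoset {n : ℕ} (τ : Equiv.Perm (Fin n)) (A U : Finset (Fin n)) :=
  Quot (fun S S' : OccCarrier A U => OccEquiv τ A S.1 S'.1)

def occMk {n : ℕ} (τ : Equiv.Perm (Fin n)) (A U : Finset (Fin n)) (S : OccCarrier A U) :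
    OccPoset τ A U :=
  Quot.mk _ S

/-- The partial order of the occurrence poset: deletion of unmarked letters. -/
def occLE {n : ℕ} (τ : Equiv.Perm (Fin n)) (A U : Finset (Fin n))
    (q q' : OccPoset τ A U) : Prop :=
  ∃ S S' : OccCarrier A U, q = occMk τ A U S ∧ q' = occMk τ A U S' ∧ S.1 ⊆ S'.1

/-- The bottom element `⟨σ⟩` of the occurrence poset. -/
def occBot {n : ℕ} (τ : Equiv.Perm (Fin n)) (A U : Finset (Fin n)) (h : A ⊆ U) :
    OccPoset τ A U :=
  occMk τ A U ⟨A, subset_rfl, h⟩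

/-- The top element `τ` of the occurrence poset. -/
def occTop {n : ℕ} (τ : Equiv.Perm (Fin n)) (A U : Finset (Fin n)) (h : A ⊆ U) :
    OccPoset τ A U :=
  occMk τ A U ⟨U, h, subset_rfl⟩

/-- `J` is an interval block of the pattern of `τ` restricted to the kept positions `S`:
`J` consists of at least two kept positions, consecutive among `S` both in position and
in value. -/
def IsBlockIn {n : ℕ} (τ : Equiv.Perm (Fin n)) (S J : Finset (Fin n)) : Prop :=
  J ⊆ S ∧ 2 ≤ J.card ∧
    (∀ x ∈ J, ∀ y ∈ J, ∀ z ∈ S, x ≤ z → z ≤ y → z ∈ J) ∧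
    (∀ x ∈ J, ∀ y ∈ J, ∀ z ∈ S, τ x ≤ τ z → τ z ≤ τ y → z ∈ J)

/-- The pair (marked occurrence `A`, permutation given by kept positions `S`) has an
interval block: an interval block disjoint from the occurrence. -/
def PairHasBlock {n : ℕ} (τ : Equiv.Perm (Fin n)) (A S : Finset (Fin n)) : Prop :=
  ∃ J : Finset (Fin n), IsBlockIn τ S J ∧ ∀ p ∈ J, p ∉ A

/-- An element of the occurrence poset is interval free if (a representative of) it has
no interval block disjoint from the marked occurrence. -/
def occIntervalFree {n : ℕ} (τ : Equiv.Perm (Fin n)) (A U : Finset (Fin n))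
    (q : OccPoset τ A U) : Prop :=
  ∃ S : OccCarrier A U, q = occMk τ A U S ∧ ¬ PairHasBlock τ A S.1

theorem OccEquiv.card_eq {n : ℕ} {τ : Equiv.Perm (Fin n)} {A S S' : Finset (Fin n)}
    (h : OccEquiv τ A S S') : S.card = S'.card := by
  obtain ⟨g, -, -⟩ := h
  simpa using Fintype.card_congr g.toEquiv

/-- The rank of an element of the occurrence poset: its number of letters minus `k`. -/
def occRank {n : ℕ} (τ : Equiv.Perm (Fin n)) (A U : Finset (Fin n)) (k : ℕ) :
    OccPoset τ A U → ℕ :=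
  Quot.lift (fun S => S.1.card - k) (fun S S' h => by
    have hc := OccEquiv.card_eq h
    show S.1.card - k = S'.1.card - k
    omega)

/-- Positions `p` and `q` lie in the same region: no position between them (inclusive)
is a marked position. -/
def SameRegion {n : ℕ} (A : Finset (Fin n)) (p q : Fin n) : Prop :=
  ∀ z : Fin n, min p q ≤ z → z ≤ max p q → z ∉ A

/-- The pair (occurrence with marked positions `A`, `τ`) is separated: any two letters in
the same region are separated in value by a letter of the occurrence. -/
def Separated {n : ℕ} (τ : Equiv.Perm (Fin n)) (A : Finset (Fin n)) : Prop :=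
  ∀ p q : Fin n, SameRegion A p q → τ p < τ q → ∃ a ∈ A, τ p < τ a ∧ τ a < τ q

/-- The letters at positions `p, q` (with `τ p < τ q`) are similar: same region, and no
letter of the occurrence lies strictly between them in value. -/
def SimilarPos {n : ℕ} (τ : Equiv.Perm (Fin n)) (A : Finset (Fin n)) (p q : Fin n) : Prop :=
  SameRegion A p q ∧ τ p < τ q ∧ ∀ a ∈ A, ¬ (τ p < τ a ∧ τ a < τ q)

/-- A group of similar letters: at least two letters, pairwise similar. -/
def IsSimilarGroup {n : ℕ} (τ : Equiv.Perm (Fin n)) (A : Finset (Fin n))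
    (G : Finset (Fin n)) : Prop :=
  2 ≤ G.card ∧ ∀ p ∈ G, ∀ q ∈ G, τ p < τ q → SimilarPos τ A p q

/-- A maximal group of similar letters: one contained in no strictly larger group. -/
def IsMaxSimilarGroup {n : ℕ} (τ : Equiv.Perm (Fin n)) (A : Finset (Fin n))
    (G : Finset (Fin n)) : Prop :=
  IsSimilarGroup τ A G ∧ ∀ G' : Finset (Fin n), IsSimilarGroup τ A G' → G ⊆ G' → G' = G

/-- The occurrence poset is a boolean algebra: isomorphic to the poset of all subsets of
a finite set, ordered by inclusion. -/
def IsBooleanOccPoset {n : ℕ} (τ : Equiv.Perm (Fin n)) (A U : Finset (Fin n)) : Prop :=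
  ∃ (m : ℕ) (e : OccPoset τ A U ≃ Finset (Fin m)),
    ∀ q q' : OccPoset τ A U, occLE τ A U q q' ↔ e q ⊆ e q'

/-- The pattern poset `P`: permutations of every length, a permutation of length `m` being
an element of `Equiv.Perm (Fin m)` (its standard form). -/
def PatternPoset := Σ m : ℕ, Equiv.Perm (Fin m)

/-- The order of the pattern poset: pattern containment. -/
def patternLE (a b : PatternPoset) : Prop :=
  ∃ f : Fin a.1 → Fin b.1, IsOccurrence a.2 b.2 f

/-- `b` covers `a` in the pattern poset: `a < b` and `b` has one letter more than `a`. -/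
def patternCovers (a b : PatternPoset) : Prop :=
  patternLE a b ∧ a ≠ b ∧ b.1 = a.1 + 1

/-! The letters of the occurrence cut the plane in which `τ` is drawn into a grid of cells, and
separation says that no cell contains two letters. If two letters share a cell, then adding either
one of them to `⟨σ⟩` gives the same element of the poset. Conversely, an isomorphism between two
marked subwords fixes the occurrence, so it moves each further letter inside its cell; if cells
contain at most one letter, then it moves nothing. Thus separation means that distinct sets of
deleted letters give distinct elements of the poset. When this holds the poset is visibly boolean.
Conversely, if the poset is the boolean algebra on `m` elements, then deleting the letters one at a
time gives a chain which shows that `m` is at least the number of these letters, and the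
surjection from sets of letters to the poset must then be injective by counting. -/

open Finset

section FinsetLattice

variable {α β : Type*} {f : Finset α → Finset β}

theorem card_le_card_of_strictMono (hf : StrictMono f) (s : Finset α) : #s ≤ #(f s) := by
  induction s using Finset.cons_induction with
  | empty => simp
  | cons a s ha ih =>
    have hlt : #(f s) < #(f (s.cons a ha)) := card_lt_card (hf (ssubset_cons ha))
    rw [card_cons]
    omega

theorem injective_of_strictMono_of_surjective [Finite α] [Finite β] (hf : StrictMono f)
    (hsurj : Function.Surjective f) : Function.Injective f := by
  have := Fintype.ofFinite α
  have := Fintype.ofFinite β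
  have hcard : Fintype.card α ≤ Fintype.card β :=
    (card_le_card_of_strictMono hf univ).trans (card_le_univ _)
  refine (hsurj.bijective_of_nat_card_le ?_).injective
  simpa using Nat.pow_le_pow_right two_pos hcard

end FinsetLattice

theorem orderIso_apply_eq_self_of_mem {α : Type*} [LinearOrder α] {A S S' : Finset α}
    (g : S ≃o S') (hg : ∀ x : S, x.1 ∈ A ↔ (g x).1 ∈ A) (hS : A ⊆ S) (hS' : A ⊆ S')
    {a : α} (ha : a ∈ A) : (g ⟨a, hS ha⟩ : α) = a := by
  let h : A → α := fun a ↦ g ⟨a, hS a.2⟩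
  have hh : StrictMono h := fun _ _ hab ↦ g.strictMono hab
  have hrange : Set.range h = Set.range ((↑) : A → α) := by
    refine Set.Subset.antisymm ?_ ?_
    · rintro _ ⟨a, rfl⟩
      exact ⟨⟨h a, (hg _).1 a.2⟩, rfl⟩
    · rintro _ ⟨b, rfl⟩
      obtain ⟨x, hx⟩ := g.surjective ⟨b, hS' b.2⟩
      have hxA : x.1 ∈ A := by simp [hg, hx]
      exact ⟨⟨x, hxA⟩, congrArg Subtype.val hx⟩
  exact congrFun ((hh.range_inj fun _ _ hab ↦ hab).1 hrange) ⟨a, ha⟩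

section Swap

variable {α β : Type*} [DecidableEq α] {A : Finset α} {a p q x y : α}

theorem swap_apply_of_mem_of_notMem (ha : a ∈ A) (hp : p ∉ A) (hq : q ∉ A) :
    Equiv.swap p q a = a :=
  Equiv.swap_apply_of_ne_of_ne (ne_of_mem_of_not_mem ha hp) (ne_of_mem_of_not_mem ha hq)

theorem lt_iff_lt_swap_of_mem_insert [LinearOrder β] {f : α → β}
    (hf : Function.Injective f) (hp : p ∉ A) (hq : q ∉ A)
    (h : ∀ a ∈ A, f a < f p ↔ f a < f q) (hx : x ∈ insert p A) (hy : y ∈ insert p A) :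
    f x < f y ↔ f (Equiv.swap p q x) < f (Equiv.swap p q y) := by
  have hswap : ∀ a ∈ A, Equiv.swap p q a = a := fun a ha ↦ swap_apply_of_mem_of_notMem ha hp hq
  have h' : ∀ a ∈ A, f p < f a ↔ f q < f a := fun a ha ↦ by
    have hpa : f a ≠ f p := hf.ne (ne_of_mem_of_not_mem ha hp)
    have hqa : f a ≠ f q := hf.ne (ne_of_mem_of_not_mem ha hq)
    rw [← not_le, ← not_le, hpa.le_iff_lt, hqa.le_iff_lt, h a ha]
  rcases mem_insert.1 hx with rfl | hxA <;> rcases mem_insert.1 hy with rfl | hyA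
  · simp
  · simpa [hswap y hyA] using h' y hyA
  · simpa [hswap x hxA] using h x hxA
  · rw [hswap x hxA, hswap y hyA]

end Swap

section OccurrencePoset

variable {n : ℕ} {τ : Equiv.Perm (Fin n)} {A U : Finset (Fin n)}

section Cells

/-- The letters at the unmarked positions `p` and `q` lie in the same cell of the grid cut out by
the occurrence: every letter of the occurrence is on the same side of both, in position and in
value. -/
def SameCell (τ : Equiv.Perm (Fin n)) (A : Finset (Fin n)) (p q : Fin n) : Prop :=
  p ∉ A ∧ q ∉ A ∧ ∀ a ∈ A, (a < p ↔ a < q) ∧ (τ a < τ p ↔ τ a < τ q)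

/-- `Separated` for the permutation given by the kept positions `U`, that is, restricted to
letters at positions in `U`. It is meant for `A ⊆ U`, where the regions of this permutation are
those of `τ` intersected with `U`. -/
def SeparatedOn (τ : Equiv.Perm (Fin n)) (A U : Finset (Fin n)) : Prop :=
  ∀ p ∈ U, ∀ q ∈ U, SameRegion A p q → τ p < τ q → ∃ a ∈ A, τ p < τ a ∧ τ a < τ q

theorem separatedOn_univ : SeparatedOn τ A univ ↔ Separated τ A := by
  simp [SeparatedOn, Separated]

theorem sameRegion_iff {p q : Fin n} :
    SameRegion A p q ↔ p ∉ A ∧ q ∉ A ∧ ∀ a ∈ A, a < p ↔ a < q := by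
  refine ⟨fun h ↦ ⟨h p (min_le_left _ _) (le_max_left _ _),
    h q (min_le_right _ _) (le_max_right _ _), fun a ha ↦ ?_⟩, ?_⟩
  · have h_notMem := h a
    grind
  · rintro ⟨hp, hq, h⟩ z hmin hmax hz
    have h_side := h z hz
    grind

theorem SameCell.symm {p q : Fin n} (h : SameCell τ A p q) : SameCell τ A q p :=
  ⟨h.2.1, h.1, fun a ha ↦ ⟨(h.2.2 a ha).1.symm, (h.2.2 a ha).2.symm⟩⟩

theorem SameCell.sameRegion {p q : Fin n} (h : SameCell τ A p q) : SameRegion A p q :=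
  sameRegion_iff.2 ⟨h.1, h.2.1, fun a ha ↦ (h.2.2 a ha).1⟩

theorem SameRegion.sameCell {p q : Fin n} (h : SameRegion A p q) (hlt : τ p < τ q)
    (hA : ∀ a ∈ A, τ p < τ a → τ q ≤ τ a) : SameCell τ A p q := by
  obtain ⟨hp, hq, hpos⟩ := sameRegion_iff.1 h
  refine ⟨hp, hq, fun a ha ↦ ⟨hpos a ha, fun hap ↦ hap.trans hlt, fun haq ↦ ?_⟩⟩
  have hle : τ a ≤ τ p := not_lt.1 fun hpa ↦ (hA a ha hpa).not_gt haq
  exact hle.lt_of_ne (τ.injective.ne (ne_of_mem_of_not_mem ha hp))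

theorem separatedOn_iff_sameCell_imp_eq :
    SeparatedOn τ A U ↔ ∀ p ∈ U, ∀ q ∈ U, SameCell τ A p q → p = q := by
  constructor
  · intro hsep
    have not_lt_of_sameCell : ∀ p ∈ U, ∀ q ∈ U, SameCell τ A p q → ¬ τ p < τ q := by
      intro p hp q hq h hlt
      obtain ⟨a, ha, hpa, haq⟩ := hsep p hp q hq h.sameRegion hlt
      exact hpa.asymm ((h.2.2 a ha).2.2 haq)
    exact fun p hp q hq h ↦ τ.injective <| le_antisymm
      (not_lt.1 (not_lt_of_sameCell q hq p hp h.symm)) (not_lt.1 (not_lt_of_sameCell p hp q hq h))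
  · intro hcell p hp q hq hr hlt
    by_contra! hA
    exact hlt.ne (congrArg τ (hcell p hp q hq (hr.sameCell hlt hA)))

end Cells

section OccEquiv

variable {S S' : Finset (Fin n)}

theorem SameCell.occEquiv_insert {p q : Fin n} (h : SameCell τ A p q) :
    OccEquiv τ A (insert p A) (insert q A) := by
  obtain ⟨hp, hq, hA⟩ := h
  have hswap : ∀ a ∈ A, Equiv.swap p q a = a := fun a ha ↦ swap_apply_of_mem_of_notMem ha hp hq
  have mem_iff (x : Fin n) : x ∈ A ↔ Equiv.swap p q x ∈ A :=
    ⟨fun hx ↦ (hswap x hx).symm ▸ hx, fun hx ↦ (Equiv.swap p q).injective (hswap _ hx) ▸ hx⟩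
  let e : {x // x ∈ insert p A} ≃ {x // x ∈ insert q A} :=
    (Equiv.swap p q).subtypeEquiv fun x ↦ by
      rw [mem_insert, mem_insert, ← mem_iff, Equiv.swap_apply_eq_iff, Equiv.swap_apply_right]
  have e_strictMono : StrictMono e := fun x y ↦
    (lt_iff_lt_swap_of_mem_insert Function.injective_id hp hq (fun a ha ↦ (hA a ha).1)
      x.2 y.2).1
  exact ⟨⟨e, e_strictMono.le_iff_le⟩,
    fun x y ↦ lt_iff_lt_swap_of_mem_insert τ.injective hp hq (fun a ha ↦ (hA a ha).2) x.2 y.2,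
    fun x ↦ mem_iff x⟩

theorem OccEquiv.exists_eq_or_sameCell (h : OccEquiv τ A S S') (hS : A ⊆ S) (hS' : A ⊆ S')
    {x : Fin n} (hx : x ∈ S) : ∃ y ∈ S', x = y ∨ SameCell τ A x y := by
  obtain ⟨g, hτ, hA⟩ := h
  have fix {a : Fin n} (ha : a ∈ A) : (g ⟨a, hS ha⟩ : Fin n) = a :=
    orderIso_apply_eq_self_of_mem g hA hS hS' ha
  refine ⟨g ⟨x, hx⟩, (g ⟨x, hx⟩).2, ?_⟩
  by_cases hxA : x ∈ A
  · exact Or.inl (fix hxA).symm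
  · refine Or.inr ⟨hxA, mt (hA ⟨x, hx⟩).2 hxA, fun a ha ↦ ⟨?_, ?_⟩⟩
    · have hlt : g ⟨a, hS ha⟩ < g ⟨x, hx⟩ ↔ a < x := g.lt_iff_lt
      rw [← hlt, ← Subtype.coe_lt_coe, fix ha]
    · rw [hτ ⟨a, hS ha⟩ ⟨x, hx⟩, fix ha]

theorem SeparatedOn.eq_of_occEquiv (hsep : SeparatedOn τ A U) (hAS : A ⊆ S) (hSU : S ⊆ U)
    (hAS' : A ⊆ S') (hSU' : S' ⊆ U) (h : OccEquiv τ A S S') : S = S' := by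
  refine eq_of_subset_of_card_le (fun x hx ↦ ?_) h.card_eq.ge
  obtain ⟨y, hy, rfl | hxy⟩ := h.exists_eq_or_sameCell hAS hAS' hx
  · exact hy
  · exact separatedOn_iff_sameCell_imp_eq.1 hsep x (hSU hx) y (hSU' hy) hxy ▸ hy

end OccEquiv

section OccPoset

instance : PartialOrder (OccCarrier A U) :=
  inferInstanceAs (PartialOrder {S : Finset (Fin n) // A ⊆ S ∧ S ⊆ U})

/-- The sets of kept positions between `A` and `U`, encoded by the unmarked positions they keep. -/
def occCarrierOrderIso (hAU : A ⊆ U) : Finset {x // x ∈ U \ A} ≃o OccCarrier A U where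
  toFun T := ⟨A ∪ T.map (Function.Embedding.subtype _), subset_union_left,
    union_subset hAU ((map_subtype_subset T).trans sdiff_subset)⟩
  invFun S := S.1.subtype (· ∈ U \ A)
  left_inv T := by
    ext x
    have hxA : x.1 ∉ A := (mem_sdiff.1 x.2).2
    simp [hxA]
  right_inv S := Subtype.ext <| by
    ext x
    have hAS : x ∈ A → x ∈ S.1 := @S.2.1 x
    have hSU : x ∈ S.1 → x ∈ U := @S.2.2 x
    simp only [subtype_map, mem_sdiff, mem_union, mem_filter]
    tauto
  map_rel_iff' {T T'} := by
    refine ⟨fun h x hx ↦ ?_, fun h ↦ union_subset_union_right (map_subset_map.2 h)⟩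
    have hxA : x.1 ∉ A := (mem_sdiff.1 x.2).2
    have hxT' : x.1 ∈ A ∪ T'.map (Function.Embedding.subtype _) :=
      h (mem_union_right A (mem_map_of_mem _ hx))
    simpa [hxA] using hxT'

theorem occMk_surjective : Function.Surjective (occMk τ A U) :=
  Quot.mk_surjective

theorem card_eq_of_occMk_eq {S S' : OccCarrier A U} (h : occMk τ A U S = occMk τ A U S') :
    #S.1 = #S'.1 :=
  congrArg (occRank τ A U 0) h

theorem occLE_occMk_of_le {S S' : OccCarrier A U} (h : S ≤ S') :
    occLE τ A U (occMk τ A U S) (occMk τ A U S') :=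
  ⟨S, S', rfl, rfl, h⟩

theorem occLE_occMk_iff_of_injective (hinj : Function.Injective (occMk τ A U))
    {S S' : OccCarrier A U} : occLE τ A U (occMk τ A U S) (occMk τ A U S') ↔ S ≤ S' := by
  refine ⟨?_, occLE_occMk_of_le⟩
  rintro ⟨T, T', hT, hT', h⟩
  rwa [hinj hT, hinj hT']

theorem strictMono_comp_occMk {β : Type*} [PartialOrder β] {f : OccPoset τ A U → β}
    (hinj : Function.Injective f) (hmono : ∀ q q', occLE τ A U q q' → f q ≤ f q') :
    StrictMono (f ∘ occMk τ A U) := by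
  intro S S' hlt
  refine (hmono _ _ (occLE_occMk_of_le hlt.le)).lt_of_ne fun heq ↦ ?_
  exact (card_lt_card hlt).ne (card_eq_of_occMk_eq (hinj heq))

theorem isBooleanOccPoset_iff_injective_occMk (hAU : A ⊆ U) :
    IsBooleanOccPoset τ A U ↔ Function.Injective (occMk τ A U) := by
  let φ := occCarrierOrderIso hAU
  constructor
  · rintro ⟨m, e, he⟩
    have hmono : StrictMono (e ∘ occMk τ A U) :=
      strictMono_comp_occMk e.injective fun q q' ↦ (he q q').1
    have hinj : Function.Injective ((e ∘ occMk τ A U) ∘ φ) :=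
      injective_of_strictMono_of_surjective (hmono.comp φ.strictMono)
        ((e.surjective.comp occMk_surjective).comp φ.surjective)
    exact (hinj.of_comp_right φ.surjective).of_comp
  · intro hinj
    let mk : OccCarrier A U ≃ OccPoset τ A U := .ofBijective _ ⟨hinj, occMk_surjective⟩
    refine ⟨_, (mk.symm.trans φ.symm.toEquiv).trans (Fintype.equivFin _).finsetCongr, ?_⟩
    refine mk.forall_congr_right.1 fun S ↦ mk.forall_congr_right.1 fun S' ↦ ?_
    have hle : occLE τ A U (mk S) (mk S') ↔ S ≤ S' := occLE_occMk_iff_of_injective hinj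
    simp [hle]

theorem injective_occMk_iff_separatedOn (hAU : A ⊆ U) :
    Function.Injective (occMk τ A U) ↔ SeparatedOn τ A U := by
  constructor
  · intro hinj
    refine separatedOn_iff_sameCell_imp_eq.2 fun p hp q hq h ↦ ?_
    let withLetter (r : Fin n) (hr : r ∈ U) : OccCarrier A U :=
      ⟨insert r A, subset_insert r A, insert_subset hr hAU⟩
    have heq : withLetter p hp = withLetter q hq := hinj (Quot.sound h.occEquiv_insert)
    exact (insert_inj h.1).1 (congrArg Subtype.val heq)
  · intro hsep
    let keptPositions : OccPoset τ A U → OccCarrier A U := Quot.lift id fun S S' h ↦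
      Subtype.ext (hsep.eq_of_occEquiv S.2.1 S.2.2 S'.2.1 S'.2.2 h)
    exact Function.LeftInverse.injective (g := keptPositions) fun _ ↦ rfl

end OccPoset

theorem occurrence_poset_boolean_iff_separated_general (hAU : A ⊆ U) :
    IsBooleanOccPoset τ A U ↔ SeparatedOn τ A U :=
  (isBooleanOccPoset_iff_injective_occMk hAU).trans (injective_occMk_iff_separatedOn hAU)

end OccurrencePoset

/-- the occurrence poset `[⟨σ⟩, τ]` is a boolean algebra if and only if the
pair `(⟨σ⟩, τ)` is separated. -/
theorem occurrence_poset_boolean_iff_separated {k n : ℕ}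
    (σ : Equiv.Perm (Fin k)) (τ : Equiv.Perm (Fin n))
    (f : Fin k → Fin n) (hf : IsOccurrence σ τ f)
    (A : Finset (Fin n)) (hA : A = Finset.image f Finset.univ) :
    IsBooleanOccPoset τ A Finset.univ ↔ Separated τ A :=
  (occurrence_poset_boolean_iff_separated_general (subset_univ A)).trans separatedOn_univ
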